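/- Let the setting be type A_N or type B_N and let (i_t,k_t), 1 ≤ t ≤ T, be a snake. The map P̄_{(i_t,k_t)} → M sending a non-overlapping tuple (p_1,…,p_T) to the product ∏_{t=1}^T m(p_t) is injective. -/

import Mathlib

namespace Paper

/-- The ambient setting: type `A N` (with `N ≥ 1`) or type `B N ε`
(with `N ≥ 2` and `0 < ε < 1/2`). -/
inductive Setting where
  | A (N : ℕ)
  | B (N : ℕ) (ε : ℝ)

namespace Setting

/-- The rank `N`. -/
def N : Setting → ℕ
  | A n => n
  | B n _ => n

/-- Validity of the parameters of the setting. -/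
def valid : Setting → Prop
  | A n => 1 ≤ n
  | B n ε => 2 ≤ n ∧ 0 < ε ∧ ε < 1 / 2

end Setting

/-- The numbers `r_i` : in type A all equal `1`; in type B, `r_N = 1` and `r_i = 2` for `i < N`. -/
def rr : Setting → ℕ → ℕ
  | .A _, _ => 1
  | .B n _, j => if j = n then 1 else 2

/-- The set `X` in type `A_N`. -/
def XA (n : ℕ) : Set (ℕ × ℤ) :=
  {ik | 1 ≤ ik.1 ∧ ik.1 ≤ n ∧ ((ik.1 : ℤ) - ik.2) % 2 = 1}

/-- The set `X` in type `B_N`. -/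
def XB (n : ℕ) : Set (ℕ × ℤ) :=
  {ik | (ik.1 = n ∧ ik.2 % 2 = 1) ∨ (1 ≤ ik.1 ∧ ik.1 < n ∧ ik.2 % 2 = 0)}

/-- The set `X ⊆ I × ℤ`. -/
def X : Setting → Set (ℕ × ℤ)
  | .A n => XA n
  | .B n _ => XB n

/-- The set `W = {(i,k) : (i, k - r_i) ∈ X}`. -/
def W (S : Setting) : Set (ℕ × ℤ) :=
  {ik | (ik.1, ik.2 - (rr S ik.1 : ℤ)) ∈ X S}

/-- The `r`-th point of a path (a finite list of points of the plane). -/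
def pt (p : List (ℝ × ℝ)) (r : ℕ) : ℝ × ℝ := p.getD r (0, 0)

/-- The set of paths `𝒫_{i,k}` in type `A_N`. -/
def pathsA (n : ℕ) (i : ℕ) (k : ℤ) : Set (List (ℝ × ℝ)) :=
  {p | p.length = n + 2 ∧
    (∀ r, r < n + 2 → (pt p r).1 = (r : ℝ)) ∧
    (pt p 0).2 = (i : ℝ) + (k : ℝ) ∧
    (pt p (n + 1)).2 = (n : ℝ) + 1 - (i : ℝ) + (k : ℝ) ∧
    (∀ r, r ≤ n → (pt p (r + 1)).2 - (pt p r).2 = 1 ∨ (pt p (r + 1)).2 - (pt p r).2 = -1)}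

/-- The set of paths `𝒫_{N,ℓ}` in type `B_N`. -/
def pathsBspin (n : ℕ) (ε : ℝ) (l : ℤ) : Set (List (ℝ × ℝ)) :=
  {p | p.length = n + 1 ∧
    (if l % 4 = 3 then ∀ r, r < n → (pt p r).1 = 2 * (r : ℝ)
     else ∀ r, r < n → (pt p r).1 = 4 * (n : ℝ) - 2 - 2 * (r : ℝ)) ∧
    (pt p n).1 = 2 * (n : ℝ) - 1 ∧
    (pt p 0).2 = (l : ℝ) + 2 * (n : ℝ) - 1 ∧
    (∀ r, r + 2 ≤ n → (pt p (r + 1)).2 - (pt p r).2 = 2 ∨ (pt p (r + 1)).2 - (pt p r).2 = -2) ∧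
    ((pt p n).2 - (pt p (n - 1)).2 = 1 + ε ∨ (pt p n).2 - (pt p (n - 1)).2 = -(1 + ε))}

/-- The set of paths `𝒫_{i,k}` in type `B_N`. -/
def pathsB (n : ℕ) (ε : ℝ) (i : ℕ) (k : ℤ) : Set (List (ℝ × ℝ)) :=
  if i = n then pathsBspin n ε k
  else {p | ∃ a b : List (ℝ × ℝ),
    a ∈ pathsBspin n ε (k - (2 * (n : ℤ) - 2 * (i : ℤ) - 1)) ∧
    b ∈ pathsBspin n ε (k + (2 * (n : ℤ) - 2 * (i : ℤ) - 1)) ∧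
    p = a ++ b.reverse ∧
    (pt a n).1 = (pt b n).1 ∧ 0 < (pt a n).2 - (pt b n).2}

/-- The set of paths `𝒫_{i,k}`. -/
def P : Setting → ℕ → ℤ → Set (List (ℝ × ℝ))
  | .A n => pathsA n
  | .B n ε => pathsB n ε

/-- The map `ι : X → ℤ × ℤ` of type `B_N`. -/
def iotaB (n : ℕ) (ik : ℕ × ℤ) : ℤ × ℤ :=
  if ik.1 = n then (2 * (n : ℤ) - 1, ik.2)
  else if (2 * (n : ℤ) + ik.2 - 2 * (ik.1 : ℤ)) % 4 = 2 then (2 * (ik.1 : ℤ), ik.2)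
  else (4 * (n : ℤ) - 2 - 2 * (ik.1 : ℤ), ik.2)

/-- The corners of a path: `Cp S p true` is the set `C_{p,+}` of upper corners, and
`Cp S p false` is the set `C_{p,-}` of lower corners. -/
def Cp (S : Setting) (p : List (ℝ × ℝ)) (up : Bool) : Set (ℕ × ℤ) :=
  match S with
  | .A n =>
    {jl | 1 ≤ jl.1 ∧ jl.1 ≤ n ∧
      pt p jl.1 = ((jl.1 : ℝ), (jl.2 : ℝ)) ∧
      (pt p (jl.1 - 1)).2 = (jl.2 : ℝ) + (if up then 1 else -1) ∧
      (pt p (jl.1 + 1)).2 = (jl.2 : ℝ) + (if up then 1 else -1)}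
  | .B n ε =>
    {jl | jl ∈ XB n ∧
      ((∃ r : ℕ, 1 ≤ r ∧ r + 1 < p.length ∧
          pt p r = (((iotaB n jl).1 : ℝ), ((iotaB n jl).2 : ℝ)) ∧
          (iotaB n jl).1 ≠ 0 ∧ (iotaB n jl).1 ≠ 2 * (n : ℤ) - 1 ∧
          (iotaB n jl).1 ≠ 4 * (n : ℤ) - 2 ∧
          (if up then (pt p r).2 < (pt p (r - 1)).2 ∧ (pt p r).2 < (pt p (r + 1)).2
           else (pt p (r - 1)).2 < (pt p r).2 ∧ (pt p (r + 1)).2 < (pt p r).2))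
       ∨ (jl.1 = n ∧
          (if up then (2 * (n : ℝ) - 1, (jl.2 : ℝ) - ε) ∈ p ∧ (2 * (n : ℝ) - 1, (jl.2 : ℝ) + ε) ∉ p
           else (2 * (n : ℝ) - 1, (jl.2 : ℝ) + ε) ∈ p ∧ (2 * (n : ℝ) - 1, (jl.2 : ℝ) - ε) ∉ p)))}

/-- `p'` is obtained from `p` by replacing the point `q` by the point `q'`. -/
def Replace1 (p p' : List (ℝ × ℝ)) (q q' : ℝ × ℝ) : Prop :=
  ∃ r : ℕ, r < p.length ∧ pt p r = q ∧ p'.length = p.length ∧ pt p' r = q' ∧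
    ∀ s, s < p.length → s ≠ r → pt p' s = pt p s

/-- `p'` is obtained from `p` by replacing the point `q1` by `q1'` and the point `q2` by `q2'`. -/
def Replace2 (p p' : List (ℝ × ℝ)) (q1 q1' q2 q2' : ℝ × ℝ) : Prop :=
  ∃ r s : ℕ, r < p.length ∧ s < p.length ∧ r ≠ s ∧ pt p r = q1 ∧ pt p s = q2 ∧
    p'.length = p.length ∧ pt p' r = q1' ∧ pt p' s = q2' ∧
    ∀ u, u < p.length → u ≠ r → u ≠ s → pt p' u = pt p u

/-- The path `p` can be lowered at `(j, l)`: `(j, l - r_j) ∈ C_{p,+}` and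
`(j, l + r_j) ∉ C_{p,+}`. -/
def CanLower (S : Setting) (p : List (ℝ × ℝ)) (j : ℕ) (l : ℤ) : Prop :=
  (j, l - (rr S j : ℤ)) ∈ Cp S p true ∧ (j, l + (rr S j : ℤ)) ∉ Cp S p true

/-- `p'` is the result of the lowering move at `(j,l)` applied to the path `p ∈ 𝒫_{i,k}`;
written `p' = p 𝒜_{j,l}⁻¹`. -/
def LoweredTo (S : Setting) (i : ℕ) (k : ℤ) (j : ℕ) (l : ℤ)
    (p p' : List (ℝ × ℝ)) : Prop :=
  p ∈ P S i k ∧ p' ∈ P S i k ∧ CanLower S p j l ∧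
  (match S with
   | .A _ => Replace1 p p' ((j : ℝ), (l : ℝ) - 1) ((j : ℝ), (l : ℝ) + 1)
   | .B n ε =>
     if j = n then
       Replace1 p p' (2 * (n : ℝ) - 1, (l : ℝ) - 1 - ε) (2 * (n : ℝ) - 1, (l : ℝ) + 1 + ε)
     else if j = n - 1 then
       Replace2 p p'
         (((iotaB n (j, l - 2)).1 : ℝ), (l : ℝ) - 2) (((iotaB n (j, l - 2)).1 : ℝ), (l : ℝ) + 2)
         (2 * (n : ℝ) - 1, (l : ℝ) - 1 + ε) (2 * (n : ℝ) - 1, (l : ℝ) + 1 - ε)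
     else
       Replace1 p p'
         (((iotaB n (j, l - 2)).1 : ℝ), (l : ℝ) - 2) (((iotaB n (j, l - 2)).1 : ℝ), (l : ℝ) + 2))

/-- The path `p` can be raised at `(j,l)`: it is of the form `p' 𝒜_{j,l}⁻¹`. -/
def CanRaise (S : Setting) (i : ℕ) (k : ℤ) (p : List (ℝ × ℝ)) (j : ℕ) (l : ℤ) : Prop :=
  ∃ p', LoweredTo S i k j l p' p

/-- The monomial group `ℳ`, realised as exponent functions: the free abelian group on the
symbols `Y_{i,k}`, `(i,k) ∈ X`, is identified with finitely supported functions `(ℕ × ℤ) → ℤ`,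
written additively. -/
def Y (x : ℕ × ℤ) : (ℕ × ℤ) → ℤ := fun z => if z = x then 1 else 0

noncomputable def ind (s : Prop) : ℤ := @ite ℤ s (Classical.propDecidable s) 1 0

/-- The monomial `m(p)` of a path: `∏ Y_{j,l}` over upper corners times `∏ Y_{j,l}⁻¹`
over lower corners. -/
noncomputable def mon (S : Setting) (p : List (ℝ × ℝ)) : (ℕ × ℤ) → ℤ :=
  fun x => ind (x ∈ Cp S p true) - ind (x ∈ Cp S p false)

/-- The monomials `A_{j,l}`, with the conventions `Y_{0,·} = Y_{N+1,·} = 1`. -/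
def Amon (S : Setting) (j : ℕ) (l : ℤ) : (ℕ × ℤ) → ℤ :=
  match S with
  | .A n =>
      Y (j, l + 1) + Y (j, l - 1) - (if j = 1 then 0 else Y (j - 1, l))
        - (if j = n then 0 else Y (j + 1, l))
  | .B n _ =>
      if j = n then Y (n, l + 1) + Y (n, l - 1) - Y (n - 1, l)
      else if j = n - 1 then
        Y (n - 1, l + 2) + Y (n - 1, l - 2) - (if j = 1 then 0 else Y (n - 2, l))
          - Y (n, l + 1) - Y (n, l - 1)
      else
        Y (j, l + 2) + Y (j, l - 2) - (if j = 1 then 0 else Y (j - 1, l)) - Y (j + 1, l)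

/-- A monomial is dominant iff all its exponents are nonnegative. -/
def Dominant (m : (ℕ × ℤ) → ℤ) : Prop := ∀ x, 0 ≤ m x

/-- A monomial is anti-dominant iff all its exponents are nonpositive. -/
def AntiDominant (m : (ℕ × ℤ) → ℤ) : Prop := ∀ x, m x ≤ 0

/-- `(i',k')` is in snake position with respect to `(i,k)`. -/
def SnakePos : Setting → ℕ × ℤ → ℕ × ℤ → Prop
  | .A _, ik, ik' => |(ik'.1 : ℤ) - (ik.1 : ℤ)| + 2 ≤ ik'.2 - ik.2
  | .B n _, ik, ik' =>
      if ik.1 = n ∧ ik'.1 = n then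
        2 ≤ ik'.2 - ik.2 ∧ (ik'.2 - ik.2) % 4 = 2
      else if ik.1 = n ∨ ik'.1 = n then
        2 * |(ik'.1 : ℤ) - (ik.1 : ℤ)| + 3 ≤ ik'.2 - ik.2 ∧
          (ik'.2 - ik.2) % 4 = (2 * |(ik'.1 : ℤ) - (ik.1 : ℤ)| - 1) % 4
      else
        2 * |(ik'.1 : ℤ) - (ik.1 : ℤ)| + 4 ≤ ik'.2 - ik.2 ∧
          (ik'.2 - ik.2) % 4 = (2 * |(ik'.1 : ℤ) - (ik.1 : ℤ)|) % 4

/-- A snake: a sequence of points of `X`, each in snake position w.r.t. the previous one. -/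
def IsSnake (S : Setting) {T : ℕ} (w : Fin T → ℕ × ℤ) : Prop :=
  (∀ t, w t ∈ X S) ∧
  ∀ (t : Fin T) (h : (t : ℕ) + 1 < T), SnakePos S (w t) (w ⟨(t : ℕ) + 1, h⟩)

/-- `p` is strictly above `p'`. -/
def StrictlyAbove (p p' : List (ℝ × ℝ)) : Prop :=
  ∀ a ∈ p, ∀ b ∈ p', a.1 = b.1 → a.2 < b.2

/-- A tuple of paths is non-overlapping. -/
def NonOverlapping {T : ℕ} (ps : Fin T → List (ℝ × ℝ)) : Prop :=
  ∀ s t : Fin T, s < t → StrictlyAbove (ps s) (ps t)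

/-- The set `𝒫̄` of non-overlapping tuples of paths attached to a snake. -/
def PBar (S : Setting) {T : ℕ} (w : Fin T → ℕ × ℤ) : Set (Fin T → List (ℝ × ℝ)) :=
  {ps | (∀ t, ps t ∈ P S (w t).1 (w t).2) ∧ NonOverlapping ps}

/-- The product `∏_t m(p_t)` of the monomials of a tuple of paths. -/
noncomputable def tmon (S : Setting) {T : ℕ} (ps : Fin T → List (ℝ × ℝ)) : (ℕ × ℤ) → ℤ :=
  ∑ t, mon S (ps t)

/-- Lowering move at `jl` on a tuple of paths: one component is lowered, the others
are unchanged. -/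
def TLoweredTo (S : Setting) {T : ℕ} (w : Fin T → ℕ × ℤ) (jl : ℕ × ℤ)
    (ps ps' : Fin T → List (ℝ × ℝ)) : Prop :=
  ∃ t, LoweredTo S (w t).1 (w t).2 jl.1 jl.2 (ps t) (ps' t) ∧ ∀ s, s ≠ t → ps' s = ps s

/-- Sequences of raising/lowering moves on a single path; the list records, for each move,
whether it was a lowering move (`true`) or a raising move (`false`), and its site. -/
inductive MoveSeq (S : Setting) (i : ℕ) (k : ℤ) :
    List (ℝ × ℝ) → List (ℝ × ℝ) → List (Bool × (ℕ × ℤ)) → Prop where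
  | nil (p : List (ℝ × ℝ)) : MoveSeq S i k p p []
  | lower {p q r : List (ℝ × ℝ)} {jl : ℕ × ℤ} {ms : List (Bool × (ℕ × ℤ))} :
      jl ∈ W S → LoweredTo S i k jl.1 jl.2 p q → MoveSeq S i k q r ms →
      MoveSeq S i k p r ((true, jl) :: ms)
  | raise {p q r : List (ℝ × ℝ)} {jl : ℕ × ℤ} {ms : List (Bool × (ℕ × ℤ))} :
      jl ∈ W S → LoweredTo S i k jl.1 jl.2 q p → MoveSeq S i k q r ms →
      MoveSeq S i k p r ((false, jl) :: ms)

/-- Sequences of raising/lowering moves on tuples of paths, all of whose intermediate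
tuples are non-overlapping. -/
inductive TMoveSeq (S : Setting) {T : ℕ} (w : Fin T → ℕ × ℤ) :
    (Fin T → List (ℝ × ℝ)) → (Fin T → List (ℝ × ℝ)) → List (Bool × (ℕ × ℤ)) → Prop where
  | nil (ps : Fin T → List (ℝ × ℝ)) : TMoveSeq S w ps ps []
  | lower {ps qs rs : Fin T → List (ℝ × ℝ)} {jl : ℕ × ℤ} {ms : List (Bool × (ℕ × ℤ))} :
      jl ∈ W S → TLoweredTo S w jl ps qs → NonOverlapping qs →
      TMoveSeq S w qs rs ms → TMoveSeq S w ps rs ((true, jl) :: ms)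
  | raise {ps qs rs : Fin T → List (ℝ × ℝ)} {jl : ℕ × ℤ} {ms : List (Bool × (ℕ × ℤ))} :
      jl ∈ W S → TLoweredTo S w jl qs ps → NonOverlapping qs →
      TMoveSeq S w qs rs ms → TMoveSeq S w ps rs ((false, jl) :: ms)

/-- Sequences of lowering moves on tuples of paths, all of whose intermediate tuples
are non-overlapping; the list records the sites, in order. -/
inductive TLowerSeq (S : Setting) {T : ℕ} (w : Fin T → ℕ × ℤ) :
    (Fin T → List (ℝ × ℝ)) → (Fin T → List (ℝ × ℝ)) → List (ℕ × ℤ) → Prop where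
  | nil (ps : Fin T → List (ℝ × ℝ)) : TLowerSeq S w ps ps []
  | cons {ps qs rs : Fin T → List (ℝ × ℝ)} {jl : ℕ × ℤ} {ms : List (ℕ × ℤ)} :
      jl ∈ W S → TLoweredTo S w jl ps qs → NonOverlapping qs →
      TLowerSeq S w qs rs ms → TLowerSeq S w ps rs (jl :: ms)

/-- Weak order on paths with the same x-coordinates: `p` is weakly above `p'`. -/
def WeaklyAbove (p p' : List (ℝ × ℝ)) : Prop :=
  p.length = p'.length ∧ ∀ r, r < p.length → (pt p r).2 ≤ (pt p' r).2

/-- `p` is weakly below `p'`. -/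
def WeaklyBelow (p p' : List (ℝ × ℝ)) : Prop :=
  p.length = p'.length ∧ ∀ r, r < p.length → (pt p' r).2 ≤ (pt p r).2

/-- The path `top(p, p')`. -/
def topPath (p p' : List (ℝ × ℝ)) : List (ℝ × ℝ) :=
  List.zipWith (fun a b => (a.1, min a.2 b.2)) p p'

/-- The distinguished point contained in the highest path `p⁺_{i,k}`. -/
def highPoint : Setting → ℕ → ℤ → ℝ × ℝ
  | .A _, i, k => ((i : ℝ), (k : ℝ))
  | .B n ε, i, k =>
      if i = n then (2 * (n : ℝ) - 1, (k : ℝ) - ε)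
      else (((iotaB n (i, k)).1 : ℝ), ((iotaB n (i, k)).2 : ℝ))

/-- The distinguished point contained in the lowest path `p⁻_{i,k}`. -/
def lowPoint : Setting → ℕ → ℤ → ℝ × ℝ
  | .A n, i, k => ((n : ℝ) + 1 - (i : ℝ), (k : ℝ) + (n : ℝ) + 1)
  | .B n ε, i, k =>
      if i = n then (2 * (n : ℝ) - 1, (k : ℝ) + 4 * (n : ℝ) - 2 + ε)
      else (((iotaB n (i, k + 4 * (n : ℤ) - 2)).1 : ℝ),
            ((iotaB n (i, k + 4 * (n : ℤ) - 2)).2 : ℝ))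

/-- The highest path `p⁺_{i,k}` : the path of `𝒫_{i,k}` with no lower corners. -/
noncomputable def highestPath (S : Setting) (i : ℕ) (k : ℤ) : List (ℝ × ℝ) :=
  Classical.epsilon fun p => p ∈ P S i k ∧ Cp S p false = ∅

/-- The lowest path `p⁻_{i,k}` : the path of `𝒫_{i,k}` with no upper corners. -/
noncomputable def lowestPath (S : Setting) (i : ℕ) (k : ℤ) : List (ℝ × ℝ) :=
  Classical.epsilon fun p => p ∈ P S i k ∧ Cp S p true = ∅

/-! The heights of a path form a walk with steps `±σ`, and its corners are the turns of the walk.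
Compare two families of such walks with the same starting points. Let `D_j(l)` be the number of
descents from height `l` in column `j` in the first family minus the number in the second, and let
`C_j(l)` be the same difference for all visits to `(j, l)`. Equality of the corners in the interior
columns means `D_{j+1}(l) = D_j(l + σ)`, and following the visits from column to column gives
`C_j(l) = D_0(l + σj) - D_0(l - σj)`. In type A the end points agree, so `C_{N+1} = 0` and `D_0` is
periodic; in type B the factors `Y_{N,l}` record how the last step crosses the spin column, which
makes `D_0` antiperiodic. As `D_0` has finite support, it vanishes in both cases. Hence every point
is left by a descent equally often in both families; as at most one walk of a non-overlapping
family passes through a given point, the families agree step by step.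

In type B a path in `𝒫_{i,k}` with `i < N` consists of two spin paths, one on each side, and
monomials are additive under this decomposition. The height in a given column determines modulo `4`
the side on which a spin path runs, so all the spin paths can be treated as one family of walks.
-/

theorem eq_zero_of_periodic_of_finite_support {A M : Type*} [AddGroup A] [IsAddTorsionFree A]
    [Zero M] {f : A → M} {c : A} (hf : Function.Periodic f c) (hc : c ≠ 0)
    (hfin : f.support.Finite) : f = 0 := by
  by_contra hne
  obtain ⟨a, ha⟩ := Function.ne_iff.1 hne
  have hinj : Function.Injective fun k : ℕ => a + k • c :=
    (add_right_injective a).comp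
      (injective_nsmul_iff_not_isOfFinAddOrder.2 (not_isOfFinAddOrder_of_isAddTorsionFree hc))
  exact Set.infinite_of_injective_forall_mem hinj
    (fun k => by rwa [Function.mem_support, hf.nsmul k a]) hfin

/-! ### Walks and their corners -/

/-- The integer sequence `z` is a walk: each of its first `m` steps is `σ` or `-σ`. -/
def IsWalk (σ : ℤ) (m : ℕ) (z : ℕ → ℤ) : Prop :=
  ∀ j < m, z (j + 1) = z j + σ ∨ z (j + 1) = z j - σ

/-- Indicator that the walk `z` has height `l` in column `j`. -/
def visit (z : ℕ → ℤ) (j : ℕ) (l : ℤ) : ℤ := if z j = l then 1 else 0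

/-- Indicator that the walk `z` leaves height `l` in column `j` by a step `-σ`. -/
def descent (σ : ℤ) (z : ℕ → ℤ) (j : ℕ) (l : ℤ) : ℤ :=
  if z j = l ∧ z (j + 1) = l - σ then 1 else 0

/-- Indicator that the walk `z` leaves height `l` in column `j` by a step `σ`. -/
def ascent (σ : ℤ) (z : ℕ → ℤ) (j : ℕ) (l : ℤ) : ℤ :=
  if z j = l ∧ z (j + 1) = l + σ then 1 else 0

/-- The contribution of column `j + 1` to the monomial of a walk: `1` at an upper corner of
height `l` (a step `-σ` followed by `σ`), `-1` at a lower corner. In this difference of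
two descents a straight descent through `(j + 1, l)` cancels. -/
def cornerWeight (σ : ℤ) (z : ℕ → ℤ) (j : ℕ) (l : ℤ) : ℤ :=
  descent σ z j (l + σ) - descent σ z (j + 1) l

/-- The contribution of a last step out of column `j` that crosses height `l`, from distance `c`:
`1` for a descent and `-1` for an ascent. This is the rule for the spin column of type B. -/
def endWeight (σ c : ℤ) (z : ℕ → ℤ) (j : ℕ) (l : ℤ) : ℤ :=
  descent σ z j (l + c) - ascent σ z j (l - c)

section Walk

variable {σ : ℤ} {m j : ℕ} {z : ℕ → ℤ}

theorem IsWalk.modEq (hz : IsWalk σ m z) : ∀ {j}, j ≤ m → z j ≡ z 0 + σ * j [ZMOD 2 * σ]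
  | 0, _ => by simp
  | j + 1, hj => by
    obtain ⟨b, hb⟩ := (hz.modEq (j := j) (by lia)).dvd
    refine (Int.modEq_iff_dvd).2 ?_
    push_cast
    rcases hz j (by lia) with h | h
    · exact ⟨b, by rw [h]; linear_combination hb⟩
    · exact ⟨b + 1, by rw [h]; linear_combination hb⟩

theorem IsWalk.ascent_eq (hσ : 0 < σ) (hz : IsWalk σ m z) (hj : j < m) (l : ℤ) :
    ascent σ z j l = visit z j l - descent σ z j l := by
  unfold ascent visit descent
  grind [hz j hj]

theorem IsWalk.visit_succ (hσ : 0 < σ) (hz : IsWalk σ m z) (hj : j < m) (l : ℤ) :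
    visit z (j + 1) l = visit z j (l - σ) - descent σ z j (l - σ) + descent σ z j (l + σ) := by
  unfold visit descent
  grind [hz j hj]

end Walk

/-! ### Families of walks with the same corners -/

/-- The number of walks of the family `z` through `(j, l)` minus that of the family `y`. -/
def visitDiff {ι : Type*} (s : Finset ι) (z y : ι → ℕ → ℤ) (j : ℕ) (l : ℤ) : ℤ :=
  ∑ t ∈ s, visit (z t) j l - ∑ t ∈ s, visit (y t) j l

/-- The number of walks of the family `z` descending from `(j, l)` minus that of the family `y`. -/
def descentDiff {ι : Type*} (σ : ℤ) (s : Finset ι) (z y : ι → ℕ → ℤ) (j : ℕ) (l : ℤ) : ℤ :=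
  ∑ t ∈ s, descent σ (z t) j l - ∑ t ∈ s, descent σ (y t) j l

/-- Two families of walks with the same starting points whose corners in the interior columns
agree, counted with sign. -/
structure CornerEquiv {ι : Type*} (σ : ℤ) (m : ℕ) (s : Finset ι) (z y : ι → ℕ → ℤ) : Prop where
  walk_left : ∀ t ∈ s, IsWalk σ m (z t)
  walk_right : ∀ t ∈ s, IsWalk σ m (y t)
  start_eq : ∀ t ∈ s, z t 0 = y t 0
  corner_eq : ∀ j, j + 1 < m → ∀ l,
    ∑ t ∈ s, cornerWeight σ (z t) j l = ∑ t ∈ s, cornerWeight σ (y t) j l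

section CornerEquiv

variable {ι : Type*} {σ c : ℤ} {m j : ℕ} {s : Finset ι} {z y : ι → ℕ → ℤ}

theorem visitDiff_eq_zero (h : ∀ t ∈ s, z t j = y t j) (l : ℤ) : visitDiff s z y j l = 0 := by
  refine sub_eq_zero.2 (Finset.sum_congr rfl fun t ht => ?_)
  rw [visit, visit, h t ht]

theorem finite_support_descentDiff (σ : ℤ) (s : Finset ι) (z y : ι → ℕ → ℤ) (j : ℕ) :
    (descentDiff σ s z y j).support.Finite := by
  classical
  refine (s.image (z · j) ∪ s.image (y · j)).finite_toSet.subset fun l hl => ?_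
  by_contra hmem
  simp only [Finset.coe_union, Finset.coe_image, Set.mem_union, Set.mem_image, Finset.mem_coe,
    not_or, not_exists, not_and] at hmem
  refine hl (sub_eq_zero.2 ?_)
  simp only [descent]
  rw [Finset.sum_eq_zero fun t ht => if_neg fun h => hmem.1 t ht h.1,
    Finset.sum_eq_zero fun t ht => if_neg fun h => hmem.2 t ht h.1]

namespace CornerEquiv

theorem descentDiff_eq (h : CornerEquiv σ m s z y) (hj : j < m) (l : ℤ) :
    descentDiff σ s z y j l = descentDiff σ s z y 0 (l + σ * j) := by
  induction j generalizing l with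
  | zero => simp
  | succ j ih =>
    have hstep : descentDiff σ s z y (j + 1) l = descentDiff σ s z y j (l + σ) := by
      have := h.corner_eq j hj l
      simp only [cornerWeight, Finset.sum_sub_distrib] at this
      unfold descentDiff
      linarith
    rw [hstep, ih (by lia)]
    congr 1
    push_cast
    ring

theorem visitDiff_succ (hσ : 0 < σ) (h : CornerEquiv σ m s z y) (hj : j < m) (l : ℤ) :
    visitDiff s z y (j + 1) l =
      visitDiff s z y j (l - σ) - descentDiff σ s z y j (l - σ) +
        descentDiff σ s z y j (l + σ) := by
  unfold visitDiff descentDiff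
  rw [Finset.sum_congr rfl fun t ht => (h.walk_left t ht).visit_succ hσ hj l,
    Finset.sum_congr rfl fun t ht => (h.walk_right t ht).visit_succ hσ hj l]
  simp only [Finset.sum_add_distrib, Finset.sum_sub_distrib]
  ring

theorem visitDiff_eq (hσ : 0 < σ) (h : CornerEquiv σ m s z y) (hj : j ≤ m) (l : ℤ) :
    visitDiff s z y j l =
      descentDiff σ s z y 0 (l + σ * j) - descentDiff σ s z y 0 (l - σ * j) := by
  induction j generalizing l with
  | zero => simp [visitDiff_eq_zero h.start_eq]
  | succ j ih =>
    have hdescent := h.descentDiff_eq (j := j) (by lia)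
    rw [h.visitDiff_succ hσ (by lia), ih (by lia), hdescent, hdescent]
    push_cast
    ring_nf

theorem periodic_descentDiff (hσ : 0 < σ) (h : CornerEquiv σ m s z y)
    (hend : ∀ t ∈ s, z t m = y t m) :
    Function.Periodic (descentDiff σ s z y 0) (2 * (σ * m)) := fun l => by
  have := h.visitDiff_eq hσ le_rfl (l + σ * m)
  rw [visitDiff_eq_zero hend, add_sub_cancel_right, add_assoc, ← two_mul] at this
  linarith

theorem antiperiodic_descentDiff (hσ : 0 < σ) (h : CornerEquiv σ (j + 1) s z y)
    (hend : ∀ l, ∑ t ∈ s, endWeight σ c (z t) j l = ∑ t ∈ s, endWeight σ c (y t) j l) :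
    Function.Antiperiodic (descentDiff σ s z y 0) (2 * (σ * j + c)) := fun l => by
  have hdescent := h.descentDiff_eq j.lt_succ_self
  have hvisit := h.visitDiff_eq hσ j.le_succ (l + σ * j)
  have hbalance : descentDiff σ s z y j (l + σ * j + c + c) =
      visitDiff s z y j (l + σ * j) - descentDiff σ s z y j (l + σ * j) := by
    have := hend (l + σ * j + c)
    simp only [endWeight, add_sub_cancel_right, Finset.sum_sub_distrib] at this
    rw [Finset.sum_congr rfl fun t ht => (h.walk_left t ht).ascent_eq hσ j.lt_succ_self _,
      Finset.sum_congr rfl fun t ht => (h.walk_right t ht).ascent_eq hσ j.lt_succ_self _] at this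
    simp only [Finset.sum_sub_distrib] at this
    unfold descentDiff visitDiff
    linarith
  rw [hdescent, hdescent, hvisit, add_sub_cancel_right] at hbalance
  rw [show l + 2 * (σ * j + c) = l + σ * j + c + c + σ * j by ring, hbalance]
  ring

end CornerEquiv

theorem sum_descent_eq_of_injOn (hinj : Set.InjOn (z · j) s) {t : ι} (ht : t ∈ s) :
    ∑ t' ∈ s, descent σ (z t') j (z t j) = descent σ (z t) j (z t j) :=
  Finset.sum_eq_single_of_mem t ht fun _ ht' hne =>
    if_neg fun h => hne (hinj ht' ht h.1)

namespace CornerEquiv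

theorem eq_of_descentDiff_eq_zero (hσ : 0 < σ) (h : CornerEquiv σ m s z y)
    (hinj : ∀ j < m, Set.InjOn (z · j) s) (hzero : descentDiff σ s z y 0 = 0) (hj : j ≤ m) :
    ∀ t ∈ s, z t j = y t j := by
  induction j with
  | zero => exact h.start_eq
  | succ j ih =>
    intro t ht
    have hcol := ih (by lia)
    have hinj' : Set.InjOn (y · j) s := (hinj j hj).congr hcol
    have hdescent : descent σ (z t) j (z t j) = descent σ (y t) j (z t j) := by
      have hdiff : descentDiff σ s z y j (z t j) = 0 := by
        rw [h.descentDiff_eq hj, hzero, Pi.zero_apply]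
      rw [descentDiff, sum_descent_eq_of_injOn (hinj j hj) ht, hcol t ht,
        sum_descent_eq_of_injOn hinj' ht, sub_eq_zero] at hdiff
      rwa [hcol t ht]
    unfold descent at hdescent
    grind [h.walk_left t ht j hj, h.walk_right t ht j hj]

theorem eq_of_end_eq (hσ : 0 < σ) (hm : 0 < m) (h : CornerEquiv σ m s z y)
    (hinj : ∀ j < m, Set.InjOn (z · j) s) (hend : ∀ t ∈ s, z t m = y t m) (hj : j ≤ m) :
    ∀ t ∈ s, z t j = y t j :=
  h.eq_of_descentDiff_eq_zero hσ hinj (eq_zero_of_periodic_of_finite_support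
    (h.periodic_descentDiff hσ hend) (by positivity) (finite_support_descentDiff σ s z y 0)) hj

theorem eq_of_endWeight_eq (hσ : 0 < σ) (hc : 0 < c) (h : CornerEquiv σ (m + 1) s z y)
    (hinj : ∀ j ≤ m, Set.InjOn (z · j) s)
    (hend : ∀ l, ∑ t ∈ s, endWeight σ c (z t) m l = ∑ t ∈ s, endWeight σ c (y t) m l)
    (hj : j ≤ m + 1) : ∀ t ∈ s, z t j = y t j :=
  h.eq_of_descentDiff_eq_zero hσ (fun j hj => hinj j (Nat.le_of_lt_succ hj))
    (eq_zero_of_periodic_of_finite_support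
      (h.antiperiodic_descentDiff hσ hend).periodic_two_mul (by positivity)
      (finite_support_descentDiff σ s z y 0)) hj

end CornerEquiv

end CornerEquiv

section IntegralHeights

variable {y : ℕ → ℝ} {σ c : ℤ} {m : ℕ}

theorem floor_eq_of_steps (h0 : y 0 = c)
    (hstep : ∀ r < m, y (r + 1) - y r = σ ∨ y (r + 1) - y r = -σ) :
    ∀ r ≤ m, (⌊y r⌋ : ℝ) = y r
  | 0, _ => by rw [h0, Int.floor_intCast]
  | r + 1, hr => by
    have ih := floor_eq_of_steps h0 hstep r (by lia)
    rcases hstep r hr with h | h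
    · rw [show y (r + 1) = (⌊y r⌋ + σ : ℤ) by push_cast; linarith, Int.floor_intCast]
    · rw [show y (r + 1) = (⌊y r⌋ - σ : ℤ) by push_cast; linarith, Int.floor_intCast]

theorem isWalk_floor (h0 : y 0 = c)
    (hstep : ∀ r < m, y (r + 1) - y r = σ ∨ y (r + 1) - y r = -σ) :
    IsWalk σ m fun r => ⌊y r⌋ := by
  intro r hr
  have hfloor := floor_eq_of_steps h0 hstep
  have h := hstep r hr
  rw [← hfloor r hr.le, ← hfloor (r + 1) hr] at h
  exact h.imp (fun h => by rify; linarith) fun h => by rify; linarith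

end IntegralHeights

/-- The comparison of the height `x` of a corner with the height `y` of a neighbouring point:
`x < y` at an upper corner, because the vertical axis points downwards, and `y < x` at a lower
corner. -/
def cornerLT {α : Type*} [LT α] (up : Bool) (x y : α) : Prop := if up then x < y else y < x

/-- The sequence `z` has a strict local extremum of height `l` in column `j + 1`: a minimum, which
is an upper corner, if `up`, and a maximum otherwise. -/
def IsCorner (z : ℕ → ℤ) (up : Bool) (j : ℕ) (l : ℤ) : Prop :=
  z (j + 1) = l ∧ cornerLT up (z (j + 1)) (z j) ∧ cornerLT up (z (j + 1)) (z (j + 2))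

theorem cornerLT_intCast {up : Bool} {a b : ℤ} :
    cornerLT up (a : ℝ) (b : ℝ) ↔ cornerLT up a b := by
  cases up <;> simp [cornerLT]

theorem ind_congr {p q : Prop} (h : p ↔ q) : ind p = ind q := by rw [propext h]

theorem IsWalk.mon_eq_cornerWeight {S : Setting} {p : List (ℝ × ℝ)} {x : ℕ × ℤ} {σ : ℤ} {m j : ℕ}
    {z : ℕ → ℤ} {l : ℤ} (hσ : 0 < σ) (hz : IsWalk σ m z) (hj : j + 1 < m)
    (hcorner : ∀ up, x ∈ Cp S p up ↔ IsCorner z up j l) : mon S p x = cornerWeight σ z j l := by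
  rw [mon, ind_congr (hcorner true), ind_congr (hcorner false)]
  simp only [ind, IsCorner, cornerLT, cornerWeight, descent]
  grind [hz j (by lia), hz (j + 1) hj]

section Points

variable {p q : List (ℝ × ℝ)} {r : ℕ} {x : ℝ × ℝ}

theorem pt_eq_getElem (hr : r < p.length) : pt p r = p[r] := List.getD_eq_getElem _ _ hr

theorem pt_mem (hr : r < p.length) : pt p r ∈ p := by
  rw [pt_eq_getElem hr]
  exact List.getElem_mem hr

theorem mem_iff_exists_pt : x ∈ p ↔ ∃ r < p.length, pt p r = x := by
  rw [List.mem_iff_getElem]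
  exact exists_congr fun r => ⟨fun ⟨hr, h⟩ => ⟨hr, by rwa [pt_eq_getElem hr]⟩,
    fun ⟨hr, h⟩ => ⟨hr, by rwa [← pt_eq_getElem hr]⟩⟩

theorem ext_pt (hlen : p.length = q.length) (h : ∀ r < p.length, pt p r = pt q r) : p = q :=
  List.ext_getElem hlen fun r hp hq => by
    rw [← pt_eq_getElem hp, ← pt_eq_getElem hq, h r hp]

theorem NonOverlapping.eq_of_mem {T : ℕ} {ps : Fin T → List (ℝ × ℝ)} (h : NonOverlapping ps)
    {s t : Fin T} (hs : x ∈ ps s) (ht : x ∈ ps t) : s = t := by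
  rcases lt_trichotomy s t with hlt | rfl | hlt
  · exact absurd (h s t hlt x hs x ht rfl) (lt_irrefl _)
  · rfl
  · exact absurd (h t s hlt x ht x hs rfl) (lt_irrefl _)

end Points

/-! ### Type A -/

/-- The heights of a path of type A, as an integer sequence. -/
noncomputable def heightWalk (p : List (ℝ × ℝ)) (r : ℕ) : ℤ := ⌊(pt p r).2⌋

section TypeA

variable {n i i' j r : ℕ} {k k' l : ℤ} {p q : List (ℝ × ℝ)}

theorem steps_of_mem_pathsA (hp : p ∈ pathsA n i k) : ∀ r < n + 1,
    (pt p (r + 1)).2 - (pt p r).2 = (1 : ℤ) ∨ (pt p (r + 1)).2 - (pt p r).2 = -(1 : ℤ) := by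
  simpa [Nat.lt_succ_iff] using hp.2.2.2.2

theorem start_of_mem_pathsA (hp : p ∈ pathsA n i k) : (pt p 0).2 = (i + k : ℤ) := by
  simpa using hp.2.2.1

theorem isWalk_heightWalk (hp : p ∈ pathsA n i k) : IsWalk 1 (n + 1) (heightWalk p) :=
  isWalk_floor (start_of_mem_pathsA hp) (steps_of_mem_pathsA hp)

theorem pt_eq_heightWalk (hp : p ∈ pathsA n i k) (hr : r ≤ n + 1) :
    pt p r = ((r : ℝ), (heightWalk p r : ℝ)) :=
  Prod.ext (hp.2.1 r (by lia))
    (floor_eq_of_steps (y := fun r => (pt p r).2) (start_of_mem_pathsA hp)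
      (steps_of_mem_pathsA hp) r hr).symm

theorem mem_Cp_A_iff (hp : p ∈ pathsA n i k) (hj : j < n) (up : Bool) :
    (j + 1, l) ∈ Cp (.A n) p up ↔ IsCorner (heightWalk p) up j l := by
  have hpt := fun r hr => pt_eq_heightWalk (r := r) hp hr
  have hwalk := isWalk_heightWalk hp
  simp only [Cp, Set.mem_ofPred_eq, hpt _ (show j + 1 ≤ n + 1 by lia),
    hpt _ (show j + 1 + 1 ≤ n + 1 by lia), Nat.add_sub_cancel, hpt _ (show j ≤ n + 1 by lia),
    IsCorner, cornerLT, Prod.mk.injEq, Int.cast_inj, true_and]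
  cases up <;> simp only [if_true, if_false, Bool.false_eq_true] <;> norm_cast <;>
    grind [hwalk j (by lia), hwalk (j + 1) (by lia)]

theorem eq_of_heightWalk_eq (hp : p ∈ pathsA n i k) (hq : q ∈ pathsA n i' k')
    (h : ∀ r ≤ n + 1, heightWalk p r = heightWalk q r) : p = q :=
  ext_pt (hp.1.trans hq.1.symm) fun r hr => by
    have hr' : r ≤ n + 1 := by rw [hp.1] at hr; lia
    rw [pt_eq_heightWalk hp hr', pt_eq_heightWalk hq hr', h r hr']

theorem eq_of_tmon_eq_A {T : ℕ} {w : Fin T → ℕ × ℤ} {ps qs : Fin T → List (ℝ × ℝ)}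
    (hps : ps ∈ PBar (.A n) w) (hqs : ∀ t, qs t ∈ pathsA n (w t).1 (w t).2)
    (h : tmon (.A n) ps = tmon (.A n) qs) : ps = qs := by
  obtain ⟨hps, hno⟩ : (∀ t, ps t ∈ pathsA n (w t).1 (w t).2) ∧ NonOverlapping ps := hps
  have heq : CornerEquiv 1 (n + 1) Finset.univ (heightWalk <| ps ·) (heightWalk <| qs ·) :=
    { walk_left := fun t _ => isWalk_heightWalk (hps t)
      walk_right := fun t _ => isWalk_heightWalk (hqs t)
      start_eq := fun t _ => by
        simp only [heightWalk, start_of_mem_pathsA (hps t), start_of_mem_pathsA (hqs t)]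
      corner_eq := fun j hj l => by
        have hmon : ∀ {i k p}, p ∈ pathsA n i k →
            cornerWeight 1 (heightWalk p) j l = mon (.A n) p (j + 1, l) := fun hp =>
          ((isWalk_heightWalk hp).mon_eq_cornerWeight one_pos hj
            (mem_Cp_A_iff hp (Nat.lt_of_succ_lt_succ hj))).symm
        rw [Finset.sum_congr rfl fun t _ => hmon (hps t),
          Finset.sum_congr rfl fun t _ => hmon (hqs t), ← Finset.sum_apply, ← Finset.sum_apply]
        exact congrFun h _ }
  have hinj : ∀ j < n + 1,
      Set.InjOn (fun t => heightWalk (ps t) j) (Finset.univ : Finset (Fin T)) :=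
    fun j hj t _ t' _ (hheight : heightWalk (ps t) j = heightWalk (ps t') j) =>
      hno.eq_of_mem (pt_mem (r := j) (by rw [(hps t).1]; lia)) <| by
        rw [pt_eq_heightWalk (hps t) hj.le, hheight, ← pt_eq_heightWalk (hps t') hj.le]
        exact pt_mem (by rw [(hps t').1]; lia)
  have hend : ∀ t ∈ Finset.univ, heightWalk (ps t) (n + 1) = heightWalk (qs t) (n + 1) :=
    fun t _ => by rw [heightWalk, heightWalk, (hps t).2.2.2.1, (hqs t).2.2.2.1]
  exact funext fun t => eq_of_heightWalk_eq (hps t) (hqs t) fun r hr =>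
    heq.eq_of_end_eq one_pos n.succ_pos hinj hend hr t (Finset.mem_univ t)

end TypeA

/-! ### Monomials in type B -/

/-- The interior point `q` of the path `p` is a strict local extremum of the height: a minimum,
which is an upper corner, if `up`, and a maximum otherwise. -/
def HasCorner (up : Bool) (p : List (ℝ × ℝ)) (q : ℝ × ℝ) : Prop :=
  ∃ r, r + 2 < p.length ∧ pt p (r + 1) = q ∧
    cornerLT up (pt p (r + 1)).2 (pt p r).2 ∧ cornerLT up (pt p (r + 1)).2 (pt p (r + 2)).2

section Concatenation

variable {a b p : List (ℝ × ℝ)} {q : ℝ × ℝ} {up : Bool} {r : ℕ}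

theorem pt_append_left (hr : r < a.length) : pt (a ++ b) r = pt a r := List.getD_append _ _ _ _ hr

theorem pt_append_right : pt (a ++ b) (a.length + r) = pt b r := by
  rw [pt, List.getD_append_right _ _ _ _ (Nat.le_add_right _ _), Nat.add_sub_cancel_left, pt]

theorem pt_reverse (hr : r < p.length) : pt p.reverse r = pt p (p.length - 1 - r) :=
  congrFun (List.getD_reverse _ hr) _

theorem HasCorner.mem (h : HasCorner up p q) : q ∈ p := by
  obtain ⟨r, hr, rfl, -⟩ := h
  exact pt_mem (by lia)

theorem HasCorner.reverse (h : HasCorner up p q) : HasCorner up p.reverse q := by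
  obtain ⟨r, hr, hq, hprev, hnext⟩ := h
  refine ⟨p.length - 3 - r, by rw [List.length_reverse]; lia, ?_⟩
  rw [pt_reverse (by lia), pt_reverse (by lia), pt_reverse (by lia),
    show p.length - 1 - (p.length - 3 - r + 1) = r + 1 by lia,
    show p.length - 1 - (p.length - 3 - r) = r + 2 by lia,
    show p.length - 1 - (p.length - 3 - r + 2) = r by lia]
  exact ⟨hq, hnext, hprev⟩

theorem hasCorner_reverse : HasCorner up p.reverse q ↔ HasCorner up p q :=
  ⟨fun h => by simpa using h.reverse, HasCorner.reverse⟩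

theorem hasCorner_append (ha : pt a (a.length - 1) ≠ q) (hb : pt b 0 ≠ q) :
    HasCorner up (a ++ b) q ↔ HasCorner up a q ∨ HasCorner up b q := by
  constructor
  · rintro ⟨r, hr, h⟩
    rw [List.length_append] at hr
    rcases lt_or_ge r a.length with hra | hra
    · have hlast : r + 1 ≠ a.length - 1 := fun hlast =>
        ha (by rw [← h.1, pt_append_left (by lia), hlast])
      have hfirst : r + 1 ≠ a.length + 0 := fun hfirst =>
        hb (by rw [← h.1, hfirst, pt_append_right])
      have hlt : r + 2 < a.length := by lia
      rw [pt_append_left (by lia), pt_append_left (by lia), pt_append_left hlt] at h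
      exact Or.inl ⟨r, hlt, h⟩
    · obtain ⟨r, rfl⟩ := Nat.exists_eq_add_of_le hra
      rw [add_assoc, add_assoc, pt_append_right, pt_append_right, pt_append_right] at h
      exact Or.inr ⟨r, by lia, h⟩
  · rintro (⟨r, hr, h⟩ | ⟨r, hr, h⟩)
    · refine ⟨r, by rw [List.length_append]; lia, ?_⟩
      rwa [pt_append_left (by lia), pt_append_left (by lia), pt_append_left hr]
    · refine ⟨a.length + r, by rw [List.length_append]; lia, ?_⟩
      rwa [add_assoc, add_assoc, pt_append_right, pt_append_right, pt_append_right]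

end Concatenation

section MonomialsB

variable {n j : ℕ} {ε : ℝ} {l : ℤ} {a b p : List (ℝ × ℝ)} {x : ℕ × ℤ}

theorem ind_or {P Q : Prop} (h : P → ¬Q) : ind (P ∨ Q) = ind P + ind Q := by
  unfold ind
  grind

theorem mem_Cp_B_iff_of_lt (hj : 1 ≤ j) (hjn : j < n) (up : Bool) :
    (j, l) ∈ Cp (.B n ε) p up ↔
      l % 2 = 0 ∧ HasCorner up p ((iotaB n (j, l)).1, (iotaB n (j, l)).2) := by
  have hX : (j, l) ∈ XB n ↔ l % 2 = 0 := by
    simp only [XB, Set.mem_ofPred_eq]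
    lia
  have hinterior : (iotaB n (j, l)).1 ≠ 0 ∧ (iotaB n (j, l)).1 ≠ 2 * (n : ℤ) - 1 ∧
      (iotaB n (j, l)).1 ≠ 4 * (n : ℤ) - 2 := by
    unfold iotaB
    grind
  simp only [Cp, Set.mem_ofPred_eq, hX, hjn.ne, false_and, or_false]
  refine and_congr_right fun _ => ⟨?_, ?_⟩
  · rintro ⟨r, hr, hlen, hpt, -, -, -, h⟩
    obtain ⟨r, rfl⟩ := Nat.exists_eq_add_of_le' hr
    exact ⟨r, hlen, hpt, by cases up <;> exact h⟩
  · rintro ⟨r, hlen, hpt, h⟩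
    exact ⟨r + 1, by lia, hlen, hpt, hinterior.1, hinterior.2.1, hinterior.2.2,
      by cases up <;> exact h⟩

theorem mon_B_eq_zero (hx : x ∉ XB n) : mon (.B n ε) p x = 0 := by
  have hCp : ∀ up, x ∉ Cp (.B n ε) p up := fun up h => hx h.1
  simp only [mon, ind, hCp, if_false, sub_self]

theorem mon_B_self (hl : l % 2 = 1) : mon (.B n ε) p (n, l) =
    ind ((2 * (n : ℝ) - 1, (l : ℝ) - ε) ∈ p) - ind ((2 * (n : ℝ) - 1, (l : ℝ) + ε) ∈ p) := by
  have hX : (n, l) ∈ XB n := Or.inl ⟨rfl, hl⟩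
  simp only [mon, ind, Cp, Set.mem_ofPred_eq, hX, true_and, iotaB, if_true, ne_eq, not_true,
    false_and, and_false, exists_false, false_or, Bool.false_eq_true, if_false]
  grind

theorem mon_append_reverse (hab : a.Disjoint b) (ha : (pt a (a.length - 1)).1 = 2 * (n : ℝ) - 1)
    (hb : (pt b (b.length - 1)).1 = 2 * (n : ℝ) - 1) (hb' : b ≠ []) :
    mon (.B n ε) (a ++ b.reverse) = mon (.B n ε) a + mon (.B n ε) b := by
  ext ⟨j, l⟩
  rw [Pi.add_apply]
  have hmem : ∀ q, ind (q ∈ a ++ b.reverse) = ind (q ∈ a) + ind (q ∈ b) := fun q => by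
    rw [ind_congr List.mem_append, ind_congr (or_congr_right List.mem_reverse),
      ind_or fun h h' => hab h h']
  by_cases hx : (j, l) ∈ XB n
  · rcases hx with ⟨rfl, hl⟩ | ⟨hj, hjn, -⟩
    · rw [mon_B_self hl, mon_B_self hl, mon_B_self hl, hmem, hmem]
      ring
    · have hcol : ((iotaB n (j, l)).1 : ℝ) ≠ 2 * (n : ℝ) - 1 := by
        unfold iotaB
        norm_cast
        grind
      have hcorner : ∀ up, ind ((j, l) ∈ Cp (.B n ε) (a ++ b.reverse) up) =
          ind ((j, l) ∈ Cp (.B n ε) a up) + ind ((j, l) ∈ Cp (.B n ε) b up) := fun up => by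
        rw [← ind_or fun h h' => hab ((mem_Cp_B_iff_of_lt hj hjn up).1 h).2.mem
          ((mem_Cp_B_iff_of_lt hj hjn up).1 h').2.mem]
        refine ind_congr ?_
        rw [mem_Cp_B_iff_of_lt hj hjn, mem_Cp_B_iff_of_lt hj hjn, mem_Cp_B_iff_of_lt hj hjn,
          hasCorner_append, hasCorner_reverse, and_or_left]
        · exact fun h => hcol (by rw [← ha, h])
        · rw [pt_reverse (List.length_pos_iff.2 hb'), Nat.sub_zero]
          exact fun h => hcol (by rw [← hb, h])
      simp only [mon, hcorner]
      ring
  · simp only [mon_B_eq_zero hx, add_zero]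

end MonomialsB

/-! ### Spin paths of type B -/

/-- The abscissa of the `r`-th point, `r < n`, of a spin path of label `ℓ`: these paths run from
the left if `ℓ ≡ 3 (mod 4)` and from the right if `ℓ ≡ 1 (mod 4)`. -/
def sideColumn (n : ℕ) (ℓ : ℤ) (r : ℕ) : ℤ := if ℓ % 4 = 3 then 2 * r else 4 * n - 2 - 2 * r

/-- The heights of a spin path with its last step `±(1 + ε)` rescaled to `±2`, so that all steps
have the same size. -/
noncomputable def straightHeight (n : ℕ) (ε : ℝ) (a : List (ℝ × ℝ)) (r : ℕ) : ℝ :=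
  if r = n then (pt a (n - 1)).2 + 2 / (1 + ε) * ((pt a n).2 - (pt a (n - 1)).2) else (pt a r).2

/-- The straightened heights of a spin path, as an integer sequence. -/
noncomputable def spinWalk (n : ℕ) (ε : ℝ) (a : List (ℝ × ℝ)) (r : ℕ) : ℤ :=
  ⌊straightHeight n ε a r⌋

section SpinColumns

variable {n r : ℕ} {ε : ℝ} {ℓ ℓ' : ℤ} {a b : List (ℝ × ℝ)}

theorem fst_of_mem_pathsBspin (ha : a ∈ pathsBspin n ε ℓ) (hr : r < n) :
    (pt a r).1 = sideColumn n ℓ r := by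
  have h := ha.2.1
  unfold sideColumn
  split_ifs at h ⊢ <;> exact_mod_cast h r hr

theorem sideColumn_ne : sideColumn n ℓ r ≠ 2 * n - 1 := by
  unfold sideColumn
  lia

theorem fst_ne_of_mem_pathsBspin (ha : a ∈ pathsBspin n ε ℓ) (hr : r < n) :
    (pt a r).1 ≠ 2 * n - 1 := by
  rw [fst_of_mem_pathsBspin ha hr]
  exact_mod_cast sideColumn_ne

theorem pt_eq_of_fst_eq (ha : a ∈ pathsBspin n ε ℓ) {q : ℝ × ℝ} (hq : q ∈ a)
    (hcol : q.1 = 2 * n - 1) : pt a n = q := by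
  obtain ⟨r, hr, rfl⟩ := mem_iff_exists_pt.1 hq
  rw [ha.1] at hr
  rcases (Nat.lt_succ_iff.1 hr).lt_or_eq with hr | rfl
  · exact absurd hcol (fst_ne_of_mem_pathsBspin ha hr)
  · rfl

theorem disjoint_of_mem_pathsBspin (ha : a ∈ pathsBspin n ε ℓ) (hb : b ∈ pathsBspin n ε ℓ')
    (hside : ℓ % 4 = 3 ↔ ¬ℓ' % 4 = 3) (hend : pt a n ≠ pt b n) : a.Disjoint b := by
  intro q hqa hqb
  by_cases hcol : q.1 = 2 * n - 1
  · exact hend ((pt_eq_of_fst_eq ha hqa hcol).trans (pt_eq_of_fst_eq hb hqb hcol).symm)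
  obtain ⟨r, hr, rfl⟩ := mem_iff_exists_pt.1 hqa
  obtain ⟨s, hs, hsr⟩ := mem_iff_exists_pt.1 hqb
  rw [ha.1] at hr
  rw [hb.1] at hs
  have hr' : r ≠ n := fun h => hcol (by rw [h, ha.2.2.1])
  have hs' : s ≠ n := fun h => hcol (by rw [← hsr, h, hb.2.2.1])
  have heq : sideColumn n ℓ' s = sideColumn n ℓ r := by
    have := congrArg Prod.fst hsr
    rw [fst_of_mem_pathsBspin ha (by lia), fst_of_mem_pathsBspin hb (by lia)] at this
    exact_mod_cast this
  unfold sideColumn at heq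
  grind

end SpinColumns

section SpinWalk

variable {n j r : ℕ} {ε : ℝ} {ℓ ℓ' : ℤ} {a b : List (ℝ × ℝ)} {up : Bool}

theorem straightHeight_zero (hn : 0 < n) (ha : a ∈ pathsBspin n ε ℓ) :
    straightHeight n ε a 0 = (ℓ + 2 * n - 1 : ℤ) := by
  rw [straightHeight, if_neg hn.ne, ha.2.2.2.1]
  push_cast
  ring

theorem straightHeight_steps (hε : 0 < ε) (ha : a ∈ pathsBspin n ε ℓ) : ∀ r < n,
    straightHeight n ε a (r + 1) - straightHeight n ε a r = (2 : ℤ) ∨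
      straightHeight n ε a (r + 1) - straightHeight n ε a r = -(2 : ℤ) := by
  intro r hr
  rw [straightHeight, straightHeight, if_neg hr.ne]
  obtain rfl | hr' : n = r + 1 ∨ r + 1 < n := by lia
  · rw [if_pos rfl, Nat.add_sub_cancel, add_sub_cancel_left]
    refine ha.2.2.2.2.2.imp (fun h => ?_) fun h => ?_ <;>
    · rw [Nat.add_sub_cancel] at h
      rw [h]
      push_cast
      field_simp
  · rw [if_neg hr'.ne]
    exact_mod_cast ha.2.2.2.2.1 r hr'

theorem spinWalk_zero (hn : 0 < n) (ha : a ∈ pathsBspin n ε ℓ) :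
    spinWalk n ε a 0 = ℓ + 2 * n - 1 := by
  rw [spinWalk, straightHeight_zero hn ha, Int.floor_intCast]

theorem isWalk_spinWalk (hn : 0 < n) (hε : 0 < ε) (ha : a ∈ pathsBspin n ε ℓ) :
    IsWalk 2 n (spinWalk n ε a) :=
  isWalk_floor (straightHeight_zero hn ha) (straightHeight_steps hε ha)

theorem spinWalk_modEq (hn : 0 < n) (hε : 0 < ε) (ha : a ∈ pathsBspin n ε ℓ) (hj : j ≤ n) :
    spinWalk n ε a j ≡ ℓ + 2 * n - 1 + 2 * j [ZMOD 4] := by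
  rw [← spinWalk_zero hn ha]
  exact (isWalk_spinWalk hn hε ha).modEq hj

theorem cast_spinWalk (hn : 0 < n) (hε : 0 < ε) (ha : a ∈ pathsBspin n ε ℓ) (hr : r ≤ n) :
    (spinWalk n ε a r : ℝ) = straightHeight n ε a r :=
  floor_eq_of_steps (straightHeight_zero hn ha) (straightHeight_steps hε ha) r hr

theorem pt_eq_spinWalk (hn : 0 < n) (hε : 0 < ε) (ha : a ∈ pathsBspin n ε ℓ) (hr : r < n) :
    pt a r = ((sideColumn n ℓ r : ℝ), (spinWalk n ε a r : ℝ)) :=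
  Prod.ext (fst_of_mem_pathsBspin ha hr) <| by
    rw [cast_spinWalk hn hε ha hr.le, straightHeight, if_neg hr.ne]

theorem pt_last_eq_spinWalk (hn : 0 < n) (hε : 0 < ε) (ha : a ∈ pathsBspin n ε ℓ) :
    pt a n = (2 * (n : ℝ) - 1, spinWalk n ε a (n - 1) +
      (1 + ε) / 2 * (spinWalk n ε a n - spinWalk n ε a (n - 1))) :=
  Prod.ext ha.2.2.1 <| by
    rw [cast_spinWalk hn hε ha le_rfl, cast_spinWalk hn hε ha (n.sub_le 1), straightHeight,
      straightHeight, if_pos rfl, if_neg (by lia)]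
    field_simp
    ring

theorem eq_of_spinWalk_eq (hn : 0 < n) (hε : 0 < ε) (ha : a ∈ pathsBspin n ε ℓ)
    (hb : b ∈ pathsBspin n ε ℓ) (h : ∀ r ≤ n, spinWalk n ε a r = spinWalk n ε b r) : a = b :=
  ext_pt (ha.1.trans hb.1.symm) fun r hr => by
    rw [ha.1] at hr
    rcases (Nat.lt_succ_iff.1 hr).lt_or_eq with hr | rfl
    · rw [pt_eq_spinWalk hn hε ha hr, pt_eq_spinWalk hn hε hb hr, h r hr.le]
    · rw [pt_last_eq_spinWalk hn hε ha, pt_last_eq_spinWalk hn hε hb, h r le_rfl,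
        h (r - 1) (r.sub_le 1)]

theorem pt_eq_of_spinWalk_eq (hn : 0 < n) (hε : 0 < ε) (ha : a ∈ pathsBspin n ε ℓ)
    (hb : b ∈ pathsBspin n ε ℓ') (hℓ : ℓ ≡ ℓ' [ZMOD 4]) (hr : r < n)
    (h : spinWalk n ε a r = spinWalk n ε b r) : pt a r = pt b r := by
  rw [pt_eq_spinWalk hn hε ha hr, pt_eq_spinWalk hn hε hb hr, h, sideColumn, sideColumn, hℓ.eq]

theorem cornerLT_pt_succ (hn : 0 < n) (hε : 0 < ε) (ha : a ∈ pathsBspin n ε ℓ) (hr : r < n) :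
    cornerLT up (pt a r).2 (pt a (r + 1)).2 ↔
      cornerLT up (spinWalk n ε a r) (spinWalk n ε a (r + 1)) := by
  rw [← cornerLT_intCast, pt_eq_spinWalk hn hε ha hr]
  obtain rfl | hr' : n = r + 1 ∨ r + 1 < n := by lia
  · rw [pt_last_eq_spinWalk hn hε ha, Nat.add_sub_cancel]
    have hscale : 0 < (1 + ε) / 2 := by positivity
    cases up
    · simp [cornerLT, hscale, mul_neg_iff, hscale.not_gt]
    · simp [cornerLT, hscale]
  · rw [pt_eq_spinWalk hn hε ha hr']

theorem iotaB_spinWalk (hε : 0 < ε) (ha : a ∈ pathsBspin n ε ℓ) (hℓ : ℓ % 2 = 1) (hj : j < n) :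
    iotaB n (j, spinWalk n ε a j) = (sideColumn n ℓ j, spinWalk n ε a j) := by
  have hmod := (spinWalk_modEq (by lia) hε ha hj.le).eq
  unfold iotaB sideColumn
  grind

end SpinWalk
section SpinMonomials

variable {n j : ℕ} {ε : ℝ} {ℓ l : ℤ} {a : List (ℝ × ℝ)}

theorem iotaB_snd (x : ℕ × ℤ) : (iotaB n x).2 = x.2 := by
  unfold iotaB
  split_ifs <;> rfl

theorem isCorner_spinWalk_iff (hε : 0 < ε) (ha : a ∈ pathsBspin n ε ℓ) (hj : j + 1 < n)
    (up : Bool) : IsCorner (spinWalk n ε a) up j l ↔ spinWalk n ε a (j + 1) = l ∧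
      cornerLT up (pt a (j + 1)).2 (pt a j).2 ∧ cornerLT up (pt a (j + 1)).2 (pt a (j + 2)).2 := by
  rw [cornerLT_pt_succ (by lia) hε ha hj, pt_eq_spinWalk (by lia) hε ha hj,
    pt_eq_spinWalk (by lia) hε ha (by lia), cornerLT_intCast, IsCorner]

theorem mem_Cp_spin_iff (hε : 0 < ε) (ha : a ∈ pathsBspin n ε ℓ) (hℓ : ℓ % 2 = 1)
    (hj : j + 1 < n) (up : Bool) :
    (j + 1, l) ∈ Cp (.B n ε) a up ↔ IsCorner (spinWalk n ε a) up j l := by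
  rw [mem_Cp_B_iff_of_lt (Nat.le_add_left 1 j) hj]
  constructor
  · rintro ⟨-, r, hr, hpt, hcorner⟩
    rw [ha.1] at hr
    have hr : r + 1 < n := by lia
    rw [pt_eq_spinWalk (by lia) hε ha hr, Prod.mk.injEq, Int.cast_inj, Int.cast_inj,
      iotaB_snd] at hpt
    obtain ⟨hcol, hheight⟩ := hpt
    obtain rfl : r = j := by
      unfold iotaB sideColumn at hcol
      grind
    exact (isCorner_spinWalk_iff hε ha hj up).2 ⟨hheight, hcorner⟩
  · intro h
    obtain ⟨rfl, hcorner⟩ := (isCorner_spinWalk_iff hε ha hj up).1 h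
    refine ⟨?_, j, by rw [ha.1]; lia, ?_, hcorner⟩
    · have := (spinWalk_modEq (by lia) hε ha hj.le).eq
      lia
    · rw [iotaB_spinWalk hε ha hℓ hj, pt_eq_spinWalk (by lia) hε ha hj]

theorem mem_spin_end_iff (hn : 0 < n) (hε : 0 < ε) (hε' : ε < 1 / 2) (ha : a ∈ pathsBspin n ε ℓ)
    {σ : ℤ} (hσ : σ = 1 ∨ σ = -1) : (2 * (n : ℝ) - 1, (l : ℝ) - σ * ε) ∈ a ↔
      spinWalk n ε a (n - 1) = l + σ ∧ spinWalk n ε a n = l - σ := by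
  have hlast := pt_last_eq_spinWalk hn hε ha
  have hstep := isWalk_spinWalk hn hε ha (n - 1) (by lia)
  rw [Nat.sub_add_cancel hn] at hstep
  generalize spinWalk n ε a (n - 1) = u at *
  generalize spinWalk n ε a n = v at *
  constructor
  · intro hmem
    have hheight := congrArg Prod.snd (hlast.symm.trans (pt_eq_of_fst_eq ha hmem rfl))
    have hne : ∀ k : ℤ, (k : ℝ) ≠ 2 * ε := fun k hk => by
      have hpos : (0 : ℝ) < k := by linarith
      have hlt : (k : ℝ) < 1 := by linarith
      norm_cast at hpos hlt
      lia
    rcases hstep with rfl | rfl <;> rcases hσ with rfl | rfl <;> push_cast at hheight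
    · exact absurd (by push_cast; linarith) (hne (l - u - 1))
    · have : (u : ℝ) = (l - 1 : ℤ) := by push_cast; linarith
      norm_cast at this
      lia
    · have : (u : ℝ) = (l + 1 : ℤ) := by push_cast; linarith
      norm_cast at this
      lia
    · exact absurd (by push_cast; linarith) (hne (u - l - 1))
  · rintro ⟨rfl, rfl⟩
    rw [show (2 * (n : ℝ) - 1, (l : ℝ) - σ * ε) = pt a n by rw [hlast]; push_cast; ring_nf]
    exact pt_mem (by rw [ha.1]; lia)

theorem mon_spin_eq_endWeight (hn : 0 < n) (hε : 0 < ε) (hε' : ε < 1 / 2)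
    (ha : a ∈ pathsBspin n ε ℓ) (hℓ : ℓ % 2 = 1) :
    mon (.B n ε) a (n, l) = endWeight 2 1 (spinWalk n ε a) (n - 1) l := by
  have hstep := isWalk_spinWalk hn hε ha (n - 1) (by lia)
  rw [endWeight, descent, ascent]
  rw [Nat.sub_add_cancel hn] at hstep ⊢
  by_cases hl : l % 2 = 1
  · have hdesc := mem_spin_end_iff (l := l) hn hε hε' ha (Or.inl rfl)
    have hasc := mem_spin_end_iff (l := l) hn hε hε' ha (Or.inr rfl)
    simp only [Int.cast_one, Int.cast_neg, one_mul, neg_mul, sub_neg_eq_add] at hdesc hasc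
    rw [mon_B_self hl, ind_congr hdesc, ind_congr hasc]
    unfold ind
    grind
  · have := (spinWalk_modEq hn hε ha (n.sub_le 1)).eq
    rw [mon_B_eq_zero (by simp [XB, hl])]
    grind

end SpinMonomials
section SpinFamilies

variable {ι : Type*} {s : Finset ι} {L : ι → ℤ} {a b : ι → List (ℝ × ℝ)} {n j : ℕ} {ε : ℝ}

theorem injOn_spinWalk (hε : 0 < ε) (ha : ∀ x ∈ s, a x ∈ pathsBspin n ε (L x))
    (hinj : ∀ x ∈ s, ∀ y ∈ s, ∀ q ∈ a x, q ∈ a y → L x ≡ L y [ZMOD 4] → x = y) (hj : j < n) :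
    Set.InjOn (fun x => spinWalk n ε (a x) j) s := by
  intro x hx y hy (hheight : spinWalk n ε (a x) j = spinWalk n ε (a y) j)
  have hn : 0 < n := by lia
  have hmod : L x ≡ L y [ZMOD 4] := by
    have hx := (spinWalk_modEq hn hε (ha x hx) hj.le).eq
    have hy := (spinWalk_modEq hn hε (ha y hy) hj.le).eq
    rw [Int.ModEq]
    lia
  refine hinj x hx y hy (pt (a x) j) (pt_mem (by rw [(ha x hx).1]; lia)) ?_ hmod
  rw [pt_eq_of_spinWalk_eq hn hε (ha x hx) (ha y hy) hmod hj hheight]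
  exact pt_mem (by rw [(ha y hy).1]; lia)

theorem spin_eq_of_sum_mon_eq (hn : 0 < n) (hε : 0 < ε) (hε' : ε < 1 / 2)
    (hodd : ∀ x ∈ s, L x % 2 = 1)
    (ha : ∀ x ∈ s, a x ∈ pathsBspin n ε (L x)) (hb : ∀ x ∈ s, b x ∈ pathsBspin n ε (L x))
    (hinj : ∀ x ∈ s, ∀ y ∈ s, ∀ q ∈ a x, q ∈ a y → L x ≡ L y [ZMOD 4] → x = y)
    (hsum : ∑ x ∈ s, mon (.B n ε) (a x) = ∑ x ∈ s, mon (.B n ε) (b x)) :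
    ∀ x ∈ s, a x = b x := by
  obtain ⟨m, rfl⟩ := Nat.exists_eq_add_of_le' hn
  have hsum_apply : ∀ v, ∑ x ∈ s, mon (.B (m + 1) ε) (a x) v =
      ∑ x ∈ s, mon (.B (m + 1) ε) (b x) v := fun v => by
    simpa only [Finset.sum_apply] using congrFun hsum v
  have heq : CornerEquiv 2 (m + 1) s (spinWalk (m + 1) ε <| a ·) (spinWalk (m + 1) ε <| b ·) :=
    { walk_left := fun x hx => isWalk_spinWalk hn hε (ha x hx)
      walk_right := fun x hx => isWalk_spinWalk hn hε (hb x hx)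
      start_eq := fun x hx => by rw [spinWalk_zero hn (ha x hx), spinWalk_zero hn (hb x hx)]
      corner_eq := fun j hj l => by
        have hmon : ∀ x ∈ s, ∀ p ∈ pathsBspin (m + 1) ε (L x),
            cornerWeight 2 (spinWalk (m + 1) ε p) j l = mon (.B (m + 1) ε) p (j + 1, l) :=
          fun x hx p hp => ((isWalk_spinWalk hn hε hp).mon_eq_cornerWeight two_pos hj
            (mem_Cp_spin_iff hε hp (hodd x hx) hj)).symm
        rw [Finset.sum_congr rfl fun x hx => hmon x hx _ (ha x hx),
          Finset.sum_congr rfl fun x hx => hmon x hx _ (hb x hx), hsum_apply] }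
  have hend : ∀ l, ∑ x ∈ s, endWeight 2 1 (spinWalk (m + 1) ε (a x)) m l =
      ∑ x ∈ s, endWeight 2 1 (spinWalk (m + 1) ε (b x)) m l := fun l => by
    have hmon : ∀ x ∈ s, ∀ p ∈ pathsBspin (m + 1) ε (L x),
        endWeight 2 1 (spinWalk (m + 1) ε p) m l = mon (.B (m + 1) ε) p (m + 1, l) :=
      fun x hx p hp => (mon_spin_eq_endWeight hn hε hε' hp (hodd x hx)).symm
    rw [Finset.sum_congr rfl fun x hx => hmon x hx _ (ha x hx),
      Finset.sum_congr rfl fun x hx => hmon x hx _ (hb x hx), hsum_apply]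
  exact fun x hx => eq_of_spinWalk_eq hn hε (ha x hx) (hb x hx) fun r hr =>
    heq.eq_of_endWeight_eq two_pos one_pos
      (fun j hj => injOn_spinWalk hε ha hinj (Nat.lt_succ_of_le hj)) hend hr x hx

end SpinFamilies

/-! ### Decomposition of the paths of type B -/

/-- The labels of the spin paths making up a path in `𝒫_{i,k}` of type B. -/
def spinLabels (n i : ℕ) (k : ℤ) : Finset ℤ :=
  if i = n then {k} else {k - (2 * n - 2 * i - 1), k + (2 * n - 2 * i - 1)}

/-- The path in `𝒫_{i,k}` of type B whose constituent spin path of label `ℓ` is `a ℓ`. -/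
def joinSpin (n i : ℕ) (k : ℤ) (a : ℤ → List (ℝ × ℝ)) : List (ℝ × ℝ) :=
  if i = n then a k else a (k - (2 * n - 2 * i - 1)) ++ (a (k + (2 * n - 2 * i - 1))).reverse

section Decomposition

variable {n i : ℕ} {k ℓ ℓ' : ℤ} {ε : ℝ} {p : List (ℝ × ℝ)} {a b : ℤ → List (ℝ × ℝ)}

theorem odd_of_mem_spinLabels (hik : (i, k) ∈ XB n) (hℓ : ℓ ∈ spinLabels n i k) : ℓ % 2 = 1 := by
  simp only [XB, Set.mem_ofPred_eq] at hik
  unfold spinLabels at hℓ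
  split_ifs at hℓ <;> simp only [Finset.mem_singleton, Finset.mem_insert] at hℓ <;> lia

theorem eq_of_mem_spinLabels_of_modEq (hℓ : ℓ ∈ spinLabels n i k) (hℓ' : ℓ' ∈ spinLabels n i k)
    (h : ℓ ≡ ℓ' [ZMOD 4]) : ℓ = ℓ' := by
  unfold spinLabels at hℓ hℓ'
  rw [Int.ModEq] at h
  split_ifs at hℓ hℓ' <;> simp only [Finset.mem_singleton, Finset.mem_insert] at hℓ hℓ' <;> lia

theorem joinSpin_congr (h : ∀ ℓ ∈ spinLabels n i k, a ℓ = b ℓ) :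
    joinSpin n i k a = joinSpin n i k b := by
  unfold spinLabels at h
  unfold joinSpin
  split_ifs at h ⊢
  · exact h k (by simp)
  · rw [h _ (by simp), h (k + _) (by simp)]

theorem mem_joinSpin {x : ℝ × ℝ} (hℓ : ℓ ∈ spinLabels n i k) (hx : x ∈ a ℓ) :
    x ∈ joinSpin n i k a := by
  unfold spinLabels at hℓ
  unfold joinSpin
  split_ifs at hℓ ⊢ <;> simp only [Finset.mem_singleton, Finset.mem_insert] at hℓ
  · rwa [← hℓ]
  · rcases hℓ with rfl | rfl <;> simp [hx]

theorem exists_eq_joinSpin (hik : (i, k) ∈ XB n) (hp : p ∈ pathsB n ε i k) :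
    ∃ a : ℤ → List (ℝ × ℝ), (∀ ℓ ∈ spinLabels n i k, a ℓ ∈ pathsBspin n ε ℓ) ∧
      p = joinSpin n i k a ∧ mon (.B n ε) p = ∑ ℓ ∈ spinLabels n i k, mon (.B n ε) (a ℓ) := by
  unfold pathsB at hp
  unfold spinLabels joinSpin
  split_ifs at hp ⊢ with hin
  · exact ⟨fun _ => p, by simpa using hp, rfl, by simp⟩
  · obtain ⟨a, b, ha, hb, rfl, -, hend⟩ := hp
    have hside := hik
    simp only [XB, Set.mem_ofPred_eq] at hside
    generalize hd : 2 * (n : ℤ) - 2 * (i : ℤ) - 1 = d at ha hb ⊢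
    have hne : k - d ≠ k + d := by lia
    refine ⟨fun ℓ => if ℓ = k - d then a else b, ?_, by simp [hne.symm], ?_⟩
    · simp [ha, hb, hne.symm]
    · rw [Finset.sum_pair hne]
      simp only [if_true, hne.symm, if_false]
      refine mon_append_reverse (disjoint_of_mem_pathsBspin ha hb (by lia) ?_) ?_ ?_ ?_
      · exact fun h => by simp [h] at hend
      · rw [ha.1, Nat.add_sub_cancel, ha.2.2.1]
      · rw [hb.1, Nat.add_sub_cancel, hb.2.2.1]
      · exact List.ne_nil_of_length_pos (by rw [hb.1]; exact n.succ_pos)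

theorem eq_of_tmon_eq_B {T : ℕ} {w : Fin T → ℕ × ℤ} {ps qs : Fin T → List (ℝ × ℝ)} (hn : 0 < n)
    (hε : 0 < ε) (hε' : ε < 1 / 2) (hw : ∀ t, w t ∈ XB n) (hps : ps ∈ PBar (.B n ε) w)
    (hqs : ∀ t, qs t ∈ pathsB n ε (w t).1 (w t).2)
    (h : tmon (.B n ε) ps = tmon (.B n ε) qs) : ps = qs := by
  obtain ⟨hps, hno⟩ := hps
  choose a ha hpa hmona using fun t => exists_eq_joinSpin (hw t) (hps t)
  choose b hb hqb hmonb using fun t => exists_eq_joinSpin (hw t) (hqs t)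
  let s : Finset (Σ _ : Fin T, ℤ) := Finset.univ.sigma fun t => spinLabels n (w t).1 (w t).2
  have hs : ∀ {x : Σ _ : Fin T, ℤ}, x ∈ s → x.2 ∈ spinLabels n (w x.1).1 (w x.1).2 :=
    fun hx => (Finset.mem_sigma.1 hx).2
  have hsum : ∑ x ∈ s, mon (.B n ε) (a x.1 x.2) = ∑ x ∈ s, mon (.B n ε) (b x.1 x.2) := by
    rw [Finset.sum_sigma, Finset.sum_sigma]
    simpa only [tmon, hmona, hmonb] using h
  have hinj : ∀ x ∈ s, ∀ y ∈ s, ∀ q ∈ a x.1 x.2, q ∈ a y.1 y.2 → x.2 ≡ y.2 [ZMOD 4] → x = y := by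
    rintro ⟨t, ℓ⟩ hx ⟨t', ℓ'⟩ hy q hqx hqy hmod
    obtain rfl : t = t' := hno.eq_of_mem (by rw [hpa t]; exact mem_joinSpin (hs hx) hqx)
      (by rw [hpa t']; exact mem_joinSpin (hs hy) hqy)
    exact congrArg (Sigma.mk t) (eq_of_mem_spinLabels_of_modEq (hs hx) (hs hy) hmod)
  have hab := spin_eq_of_sum_mon_eq hn hε hε' (fun x hx => odd_of_mem_spinLabels (hw x.1) (hs hx))
    (fun x hx => ha x.1 x.2 (hs hx)) (fun x hx => hb x.1 x.2 (hs hx)) hinj hsum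
  funext t
  rw [hpa t, hqb t]
  exact joinSpin_congr fun ℓ hℓ =>
    hab ⟨t, ℓ⟩ (Finset.mem_sigma.2 ⟨Finset.mem_univ t, hℓ⟩)

end Decomposition

theorem stmt11_general (S : Setting) (hS : S.valid) {T : ℕ} {w : Fin T → ℕ × ℤ}
    (hw : ∀ t, w t ∈ X S) {ps qs : Fin T → List (ℝ × ℝ)} (hps : ps ∈ PBar S w)
    (hqs : ∀ t, qs t ∈ P S (w t).1 (w t).2) (h : tmon S ps = tmon S qs) : ps = qs := by
  cases S with
  | A n => exact eq_of_tmon_eq_A hps hqs h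
  | B n ε => exact eq_of_tmon_eq_B (by linarith [hS.1]) hS.2.1 hS.2.2 hw hps hqs h

/-- the map `𝒫̄ → ℳ`, `(p_1,…,p_T) ↦ ∏_t m(p_t)`, is injective. -/
theorem stmt11 (S : Setting) (hS : S.valid) {T : ℕ} (hT : 1 ≤ T)
    (w : Fin T → ℕ × ℤ) (hw : IsSnake S w) :
    Set.InjOn (tmon S) (PBar S w) :=
  fun _ hps _ hqs => stmt11_general S hS hw.1 hps hqs.1

end Paper
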